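/- arXiv:1912.11614 — 6 statements merged into one kernel-verified Lean document; each statement's English description precedes it below -/
import Mathlib

section
/- For every nonzero real k, the principal-value Fourier integral of 1/x exists and lim_{δ→0⁺, R→∞} ∫_{δ ≤ |x| ≤ R} e^{−ikx}/x dx = −iπ · sgn(k), where sgn is the sign function. (This expresses Dirichlet's discontinuous integral, i.e. the distributional identity F[1/x] = −iπ sgn(k).) -/
open MeasureTheory Real Complex Filter Topology

/-!
Let `f` be bounded and holomorphic on the upper half-plane and continuous up to the punctured real
line. The form `f(z) dz / z` is holomorphic there, so its integral over the boundary of the half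
annulus `δ ≤ |z| ≤ R`, `0 ≤ im z` vanishes; in logarithmic coordinates this is Cauchy's theorem on
the rectangle `[log δ, log R] × [0, π]`. Since `dz / z = i dθ` on circles around the origin, the
truncated integral of `f(x) / x` is `i` times the difference of the integrals of `f(δ exp(iθ))` and
`f(R exp(iθ))` over `0 ≤ θ ≤ π`. By dominated convergence these tend to `π` times the limits of `f`
at `0` and at `∞` along rays, which are `1` and `0` for `f(z) = exp(iaz)`, `a > 0`.
Complex conjugation gives the opposite sign of the frequency.
-/

section TruncatedIntegral

open Set

variable {E : Type*} [NormedAddCommGroup E] [NormedSpace ℝ E] {δ R : ℝ}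

lemma setOf_le_abs_and_abs_le_eq_Icc_union_Icc (hδ : 0 < δ) :
    {x : ℝ | δ ≤ |x| ∧ |x| ≤ R} = Icc (-R) (-δ) ∪ Icc δ R := by
  ext x
  simp only [mem_ofPred_eq, mem_union, mem_Icc]
  grind

lemma setIntegral_le_abs_and_abs_le_eq_add_comp_neg (hδ : 0 < δ) (hδR : δ ≤ R) {g : ℝ → E}
    (hg : IntegrableOn g {x : ℝ | δ ≤ |x| ∧ |x| ≤ R}) :
    ∫ x in {x : ℝ | δ ≤ |x| ∧ |x| ≤ R}, g x = (∫ x in δ..R, g x) + ∫ x in δ..R, g (-x) := by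
  rw [setOf_le_abs_and_abs_le_eq_Icc_union_Icc hδ] at hg ⊢
  have hneg : IntegrableOn g (Icc (-R) (-δ)) := hg.mono_set subset_union_left
  have hpos : IntegrableOn g (Icc δ R) := hg.mono_set subset_union_right
  have hdisj : Disjoint (Icc (-R) (-δ)) (Icc δ R) :=
    Set.disjoint_left.mpr fun x hx hx' => by linarith [hx.2, hx'.1]
  rw [setIntegral_union hdisj measurableSet_Icc hneg hpos, integral_Icc_eq_integral_Ioc,
    integral_Icc_eq_integral_Ioc, ← intervalIntegral.integral_of_le hδR,
    ← intervalIntegral.integral_of_le (neg_le_neg hδR), ← intervalIntegral.integral_comp_neg,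
    add_comm]

lemma intervalIntegral_comp_exp_log {a b : ℝ} (ha : 0 < a) (hb : 0 < b) (g : ℝ → E) :
    ∫ t in Real.log a..Real.log b, g (Real.exp t) = ∫ x in a..b, x⁻¹ • g x := by
  have hpos : ∀ x ∈ uIcc a b, 0 < x := fun x hx => (lt_min ha hb).trans_le hx.1
  rw [← intervalIntegral.integral_deriv_smul_comp_of_deriv_nonneg (f' := fun x => x⁻¹)
    (continuousOn_log.mono fun x hx => (hpos x hx).ne')
    (fun x hx => hasDerivAt_log (hpos x (Ioo_subset_Icc_self hx)).ne')
    (fun x hx => (inv_pos.mpr (hpos x (Ioo_subset_Icc_self hx))).le)]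
  refine intervalIntegral.integral_congr fun x hx => ?_
  simp only [Function.comp_apply, Real.exp_log (hpos x hx)]

end TruncatedIntegral

section Semicircle

open Set

variable {E : Type*} [NormedAddCommGroup E] [NormedSpace ℂ E] {f : ℂ → E} {δ R : ℝ}

lemma circleMap_zero_im_pos {r θ : ℝ} (hr : 0 < r) (hθ : θ ∈ Ioo 0 π) :
    0 < (circleMap 0 r θ).im := by
  rw [circleMap_zero_im]
  exact mul_pos hr (Real.sin_pos_of_mem_Ioo hθ)

lemma circleMap_zero_im_nonneg {r θ : ℝ} (hr : 0 ≤ r) (hθ : θ ∈ Icc 0 π) :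
    0 ≤ (circleMap 0 r θ).im := by
  rw [circleMap_zero_im]
  exact mul_nonneg hr (Real.sin_nonneg_of_mem_Icc hθ)

lemma cexp_add_mul_I_eq_circleMap (t θ : ℝ) :
    cexp (t + θ * I) = circleMap 0 (Real.exp t) θ := by
  rw [circleMap_zero, Complex.exp_add, ofReal_exp]

lemma cexp_eq_circleMap (w : ℂ) : cexp w = circleMap 0 (Real.exp w.re) w.im := by
  rw [← cexp_add_mul_I_eq_circleMap, re_add_im]

lemma mapsTo_cexp_Icc_reProdIm_Icc (hδ : 0 < δ) (hR : 0 < R) :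
    MapsTo cexp (Icc (Real.log δ) (Real.log R) ×ℂ Icc 0 π) {z | 0 ≤ z.im ∧ ‖z‖ ∈ Icc δ R} := by
  rintro ζ ⟨hre, him⟩
  refine ⟨?_, ?_⟩
  · rw [cexp_eq_circleMap]
    exact circleMap_zero_im_nonneg (Real.exp_pos _).le him
  · rw [Complex.norm_exp]
    exact ⟨(log_le_iff_le_exp hδ).mp hre.1, (le_log_iff_exp_le hR).mp hre.2⟩

lemma mapsTo_cexp_Ioo_reProdIm_Ioo (hδ : 0 < δ) (hR : 0 < R) :
    MapsTo cexp (Ioo (Real.log δ) (Real.log R) ×ℂ Ioo 0 π) {z | 0 < z.im ∧ ‖z‖ ∈ Ioo δ R} := by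
  rintro ζ ⟨hre, him⟩
  refine ⟨?_, ?_⟩
  · rw [cexp_eq_circleMap]
    exact circleMap_zero_im_pos (Real.exp_pos _) him
  · rw [Complex.norm_exp]
    exact ⟨(log_lt_iff_lt_exp hδ).mp hre.1, (lt_log_iff_exp_lt hR).mp hre.2⟩

/-- The integral of `f` with respect to the angle `θ ∈ [0, π]` over the upper semicircle of radius
`r` centred at the origin. It equals `-i ∫ f(z) dz / z` along that arc; it is not divided by `π`. -/
noncomputable def semicircleIntegral (f : ℂ → E) (r : ℝ) : E :=
  ∫ θ in (0 : ℝ)..π, f (circleMap 0 r θ)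

lemma intervalIntegral_inv_smul_sub_inv_smul_neg_eq_semicircleIntegral (hδ : 0 < δ) (hδR : δ ≤ R)
    (hc : ContinuousOn f {z | 0 ≤ z.im ∧ ‖z‖ ∈ Icc δ R})
    (hd : DifferentiableOn ℂ f {z | 0 < z.im ∧ ‖z‖ ∈ Ioo δ R}) :
    (∫ x in δ..R, x⁻¹ • f x) - ∫ x in δ..R, x⁻¹ • f (-x) =
      I • (semicircleIntegral f δ - semicircleIntegral f R) := by
  have hR : 0 < R := hδ.trans_le hδR
  have hlog : Real.log δ ≤ Real.log R := Real.log_le_log hδ hδR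
  have hrect := integral_boundary_rect_eq_zero_of_continuousOn_of_differentiableOn
    (fun ζ => f (cexp ζ)) (Real.log δ) (Real.log R + π * I)
    (hc.comp Complex.continuous_exp.continuousOn <| by
      simpa [uIcc_of_le hlog, uIcc_of_le pi_pos.le] using mapsTo_cexp_Icc_reProdIm_Icc hδ hR)
    (hd.comp Complex.differentiable_exp.differentiableOn <| by
      simpa [hlog, pi_pos.le] using mapsTo_cexp_Ioo_reProdIm_Ioo hδ hR)
  have hcauchy : (∫ t in Real.log δ..Real.log R, f (Real.exp t)) -
      (∫ t in Real.log δ..Real.log R, f (-Real.exp t)) +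
      I • semicircleIntegral f R - I • semicircleIntegral f δ = 0 := by
    simpa [semicircleIntegral, cexp_add_mul_I_eq_circleMap, Real.exp_log hδ, Real.exp_log hR]
      using hrect
  rw [← intervalIntegral_comp_exp_log hδ hR (fun x => f x),
    ← intervalIntegral_comp_exp_log hδ hR (fun x => f (-x)), ← sub_eq_zero, ← hcauchy]
  module

variable {C : ℝ} {v w : E}

lemma tendsto_semicircleIntegral [CompleteSpace E] {l : Filter ℝ} [l.IsCountablyGenerated]
    (hl : ∀ᶠ r in l, 0 < r) (hf : ContinuousOn f {z | 0 < z.im})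
    (hC : ∀ᶠ r in l, ∀ θ ∈ Ioo 0 π, ‖f (circleMap 0 r θ)‖ ≤ C)
    (hv : ∀ θ ∈ Ioo 0 π, Tendsto (fun r => f (circleMap 0 r θ)) l (𝓝 v)) :
    Tendsto (semicircleIntegral f) l (𝓝 (π • v)) := by
  have hπ : π • v = ∫ _ in Ioo 0 π, v := by simp [pi_pos.le]
  have hIoo (r : ℝ) : semicircleIntegral f r = ∫ θ in Ioo 0 π, f (circleMap 0 r θ) := by
    rw [semicircleIntegral, intervalIntegral.integral_of_le pi_pos.le, integral_Ioc_eq_integral_Ioo]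
  rw [funext hIoo, hπ]
  refine tendsto_integral_filter_of_dominated_convergence (fun _ => C) ?_ ?_ ?_ ?_
  · filter_upwards [hl] with r hr
    exact (hf.comp (continuous_circleMap 0 r).continuousOn
      fun θ hθ => circleMap_zero_im_pos hr hθ).aestronglyMeasurable measurableSet_Ioo
  · filter_upwards [hC] with r hr using ae_restrict_of_forall_mem measurableSet_Ioo hr
  · exact integrable_const C
  · exact ae_restrict_of_forall_mem measurableSet_Ioo hv

lemma setIntegral_inv_smul_eq_semicircleIntegral (hδ : 0 < δ) (hδR : δ ≤ R)
    (hc : ContinuousOn f {z | 0 ≤ z.im ∧ ‖z‖ ∈ Icc δ R})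
    (hd : DifferentiableOn ℂ f {z | 0 < z.im ∧ ‖z‖ ∈ Ioo δ R}) :
    ∫ x : ℝ in {x | δ ≤ |x| ∧ |x| ≤ R}, x⁻¹ • f x =
      I • (semicircleIntegral f δ - semicircleIntegral f R) := by
  have hint : IntegrableOn (fun x : ℝ => x⁻¹ • f x) {x | δ ≤ |x| ∧ |x| ≤ R} := by
    have hcont : ContinuousOn (fun x : ℝ => x⁻¹ • f x) {x | δ ≤ |x| ∧ |x| ≤ R} := by
      refine (continuousOn_inv₀.mono fun x hx => ?_).smul
        (hc.comp continuous_ofReal.continuousOn fun x hx => ?_)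
      · exact abs_pos.mp (hδ.trans_le hx.1)
      · simpa using hx
    refine hcont.integrableOn_compact ?_
    rw [setOf_le_abs_and_abs_le_eq_Icc_union_Icc hδ]
    exact isCompact_Icc.union isCompact_Icc
  rw [setIntegral_le_abs_and_abs_le_eq_add_comp_neg hδ hδR hint,
    ← intervalIntegral_inv_smul_sub_inv_smul_neg_eq_semicircleIntegral hδ hδR hc hd]
  simp only [inv_neg, ofReal_neg, neg_smul, intervalIntegral.integral_neg, ← sub_eq_add_neg]

theorem tendsto_setIntegral_inv_smul [CompleteSpace E]
    (hc : ContinuousOn f {z | 0 ≤ z.im ∧ z ≠ 0}) (hd : DifferentiableOn ℂ f {z | 0 < z.im})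
    (hC : ∀ z : ℂ, 0 < z.im → ‖f z‖ ≤ C)
    (hv : ∀ θ ∈ Ioo 0 π, Tendsto (fun r => f (circleMap 0 r θ)) (𝓝[>] 0) (𝓝 v))
    (hw : ∀ θ ∈ Ioo 0 π, Tendsto (fun r => f (circleMap 0 r θ)) atTop (𝓝 w)) :
    Tendsto (fun p : ℝ × ℝ => ∫ x : ℝ in {x | p.1 ≤ |x| ∧ |x| ≤ p.2}, x⁻¹ • f x)
      (𝓝[>] 0 ×ˢ atTop) (𝓝 (I • π • (v - w))) := by
  have hbound (r : ℝ) (hr : 0 < r) (θ : ℝ) (hθ : θ ∈ Ioo 0 π) : ‖f (circleMap 0 r θ)‖ ≤ C :=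
    hC _ (circleMap_zero_im_pos hr hθ)
  have hsmall : Tendsto (semicircleIntegral f) (𝓝[>] 0) (𝓝 (π • v)) :=
    tendsto_semicircleIntegral self_mem_nhdsWithin hd.continuousOn
      (eventually_mem_nhdsWithin.mono hbound) hv
  have hlarge : Tendsto (semicircleIntegral f) atTop (𝓝 (π • w)) :=
    tendsto_semicircleIntegral (eventually_gt_atTop 0) hd.continuousOn
      ((eventually_gt_atTop 0).mono hbound) hw
  have hradii : ∀ᶠ p : ℝ × ℝ in 𝓝[>] 0 ×ˢ atTop, p.1 ∈ Ioc 0 1 ∧ 1 ≤ p.2 :=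
    (eventually_mem_set.mpr (Ioc_mem_nhdsGT zero_lt_one)).prod_mk (eventually_ge_atTop 1)
  rw [smul_sub π]
  refine (((hsmall.comp tendsto_fst).sub (hlarge.comp tendsto_snd)).const_smul I).congr' ?_
  filter_upwards [hradii] with ⟨δ, R⟩ ⟨hδ, hR⟩
  refine (setIntegral_inv_smul_eq_semicircleIntegral hδ.1 (hδ.2.trans hR)
    (hc.mono fun z hz => ⟨hz.1, ?_⟩) (hd.mono fun z hz => hz.1)).symm
  exact norm_pos_iff.mp (hδ.1.trans_le hz.2.1)

end Semicircle

lemma norm_cexp_I_mul (a : ℝ) (z : ℂ) : ‖cexp (I * a * z)‖ = Real.exp (-(a * z.im)) := by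
  rw [Complex.norm_exp]
  simp [mul_assoc]

lemma tendsto_setIntegral_cexp_I_mul_div {a : ℝ} (ha : 0 < a) :
    Tendsto (fun p : ℝ × ℝ => ∫ x : ℝ in {x | p.1 ≤ |x| ∧ |x| ≤ p.2}, cexp (I * a * x) / x)
      (𝓝[>] 0 ×ˢ atTop) (𝓝 (I * π)) := by
  have hbound (z : ℂ) (hz : 0 < z.im) : ‖cexp (I * a * z)‖ ≤ 1 := by
    rw [norm_cexp_I_mul, Real.exp_le_one_iff]
    exact neg_nonpos.mpr (mul_pos ha hz).le
  have hzero (θ : ℝ) :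
      Tendsto (fun r => cexp (I * a * circleMap 0 r θ)) (𝓝[>] 0) (𝓝 1) := by
    have hcont : Continuous fun r : ℝ => cexp (I * a * circleMap 0 r θ) := by
      simp only [circleMap_zero]
      fun_prop
    simpa using (hcont.tendsto 0).mono_left nhdsWithin_le_nhds
  have hinfty (θ : ℝ) (hθ : θ ∈ Set.Ioo 0 π) :
      Tendsto (fun r => cexp (I * a * circleMap 0 r θ)) atTop (𝓝 0) := by
    rw [tendsto_zero_iff_norm_tendsto_zero]
    simp only [norm_cexp_I_mul, circleMap_zero_im]
    exact Real.tendsto_exp_neg_atTop_nhds_zero.comp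
      ((tendsto_id.atTop_mul_const (Real.sin_pos_of_mem_Ioo hθ)).const_mul_atTop ha)
  have hlim := tendsto_setIntegral_inv_smul (f := fun z => cexp (I * a * z)) (by fun_prop)
    (by fun_prop) hbound (fun θ _ => hzero θ) hinfty
  simpa [div_eq_inv_mul] using hlim

theorem stmt_12 (k : ℝ) (hk : k ≠ 0) :
    Filter.Tendsto
      (fun p : ℝ × ℝ => ∫ x in {x : ℝ | p.1 ≤ |x| ∧ |x| ≤ p.2},
        Complex.exp (-Complex.I * k * x) / (x : ℂ))
      ((nhdsWithin 0 (Set.Ioi 0)) ×ˢ Filter.atTop)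
      (nhds (-Complex.I * Real.pi * Real.sign k)) := by
  rcases hk.lt_or_gt with hneg | hpos
  · simpa [Real.sign_of_neg hneg] using tendsto_setIntegral_cexp_I_mul_div (neg_pos.mpr hneg)
  · have hconj := (continuous_conj.tendsto _).comp (tendsto_setIntegral_cexp_I_mul_div hpos)
    simpa [Function.comp_def, ← integral_conj, ← exp_conj, Real.sign_of_pos hpos] using hconj
end

section
/- Let φ : ℝ → ℂ be a Schwartz function and set φ̂(x) = ∫_ℝ φ(k) e^{−ikx} dk. Then ∫_ℝ sgn(x) · φ̂(x) dx = lim_{δ→0⁺} ∫_{|k| ≥ δ} (2/(ik)) · φ(k) dk; in particular the principal-value limit on the right exists. (This expresses the distributional identity F[sgn(x)] = 2/(ik).) -/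
open MeasureTheory Real Complex Filter Topology

/-! Symmetrising the kernel `2 / (ik)` over `k ↦ -k` turns the principal value into the absolutely
convergent integral of `(φ(k) - φ(-k)) / (ik)`. On the other side, the integral of `sgn · φ̂` is the
limit of the integrals over `0 < x < R` of the Fourier transform of `φ(k) - φ(-k)`; by Fubini the
latter differ from the same convergent integral by the Fourier transform of its integrand at `R`,
which tends to zero by the Riemann–Lebesgue lemma. -/

open scoped FourierTransform SchwartzMap NNReal

section Reflection

variable {E : Type*} [NormedAddCommGroup E] [NormedSpace ℝ E]

lemma isNegInvariant_restrict {G : Type*} [MeasurableSpace G] [InvolutiveNeg G] [MeasurableNeg G]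
    {μ : Measure G} [μ.IsNegInvariant] {s : Set G} (hs : -s = s) :
    (μ.restrict s).IsNegInvariant := by
  have hneg := (Measure.measurePreserving_neg μ).restrict_preimage_emb
    (MeasurableEquiv.neg G).measurableEmbedding s
  rw [Set.neg_preimage, hs] at hneg
  exact ⟨hneg.map_eq⟩

lemma integral_add_comp_neg {G : Type*} [MeasurableSpace G] [AddGroup G] [MeasurableNeg G]
    {μ : Measure G} [μ.IsNegInvariant] {g : G → E} (hg : Integrable g μ) :
    ∫ x, (g x + g (-x)) ∂μ = 2 • ∫ x, g x ∂μ := by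
  rw [integral_add hg hg.comp_neg, integral_neg_eq_self, two_nsmul]

lemma measurable_realSign : Measurable Real.sign :=
  .ite measurableSet_Iio measurable_const (.ite measurableSet_Ioi measurable_const measurable_const)

lemma abs_realSign_le_one (x : ℝ) : |Real.sign x| ≤ 1 := by
  rcases Real.sign_apply_eq x with h | h | h <;> simp [h]

lemma integral_eq_setIntegral_Ioi_add_comp_neg {F : ℝ → E} (hF : Integrable F) :
    ∫ x, F x = ∫ x in Set.Ioi (0 : ℝ), (F x + F (-x)) := by
  rw [integral_add hF.integrableOn hF.comp_neg.integrableOn, integral_comp_neg_Ioi, neg_zero,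
    ← Set.compl_Ioi, integral_add_compl measurableSet_Ioi hF]

lemma integral_sign_smul {F : ℝ → E} (hF : Integrable F) :
    ∫ x, Real.sign x • F x = ∫ x in Set.Ioi (0 : ℝ), (F x - F (-x)) := by
  have hsign : Integrable fun x => Real.sign x • F x :=
    hF.bdd_smul 1 measurable_realSign.aestronglyMeasurable (.of_forall abs_realSign_le_one)
  rw [integral_eq_setIntegral_Ioi_add_comp_neg hsign]
  refine setIntegral_congr_fun measurableSet_Ioi fun x hx => ?_
  simp [Real.sign_neg, Real.sign_of_pos (Set.mem_Ioi.mp hx), sub_eq_add_neg]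

end Reflection

lemma aecover_le_norm {G : Type*} [NormedAddCommGroup G] [MeasurableSpace G]
    [OpensMeasurableSpace G] (μ : Measure G) [NullSingletonClass μ] :
    AECover μ (𝓝[>] (0 : ℝ)) fun δ => {x : G | δ ≤ ‖x‖} where
  ae_eventually_mem := by
    filter_upwards [Measure.ae_ne μ 0] with x hx
    exact nhdsWithin_le_nhds (Iic_mem_nhds (norm_pos_iff.mpr hx))
  measurableSet δ := measurableSet_le measurable_const measurable_norm

section AngularFourier

variable {E : Type*} [NormedAddCommGroup E] [NormedSpace ℂ E]

/-- The Fourier transform `f̂(x) = ∫ e^{-ikx} f(k) dk` in the angular-frequency normalisation, as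
opposed to the kernel `e^{-2πikx}` of Mathlib's `𝓕`. -/
noncomputable def angularFourier (f : ℝ → E) (x : ℝ) : E :=
  ∫ k : ℝ, Complex.exp (-Complex.I * k * x) • f k

lemma norm_exp_neg_I_mul_mul (k x : ℝ) : ‖Complex.exp (-Complex.I * k * x)‖ = 1 := by
  simp [Complex.norm_exp]

lemma integrable_exp_smul {f : ℝ → E} (hf : Integrable f) (x : ℝ) :
    Integrable fun k : ℝ => Complex.exp (-Complex.I * k * x) • f k :=
  hf.bdd_smul 1 (by fun_prop : Continuous _).aestronglyMeasurable
    (.of_forall fun k => (norm_exp_neg_I_mul_mul k x).le)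

lemma angularFourier_eq_fourier (f : ℝ → E) (x : ℝ) :
    angularFourier f x = 𝓕 f (x / (2 * π)) := by
  rw [fourier_real_eq_integral_exp_smul, angularFourier]
  congr! 4 with k
  have hπ : (π : ℂ) ≠ 0 := by exact_mod_cast Real.pi_ne_zero
  push_cast
  field_simp

lemma angularFourier_sub {f g : ℝ → E} (hf : Integrable f) (hg : Integrable g) (x : ℝ) :
    angularFourier (fun k => f k - g k) x = angularFourier f x - angularFourier g x := by
  simp only [angularFourier, smul_sub]
  exact integral_sub (integrable_exp_smul hf x) (integrable_exp_smul hg x)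

lemma angularFourier_comp_neg (f : ℝ → E) (x : ℝ) :
    angularFourier (fun k => f (-k)) x = angularFourier f (-x) := by
  rw [angularFourier, angularFourier, ← integral_neg_eq_self]
  simp

lemma tendsto_angularFourier_atTop (f : ℝ → E) :
    Tendsto (angularFourier f) atTop (𝓝 0) := by
  have hscale : Tendsto (fun x : ℝ => x / (2 * π)) atTop (cocompact ℝ) :=
    (tendsto_id.atTop_div_const (by positivity)).mono_right atTop_le_cocompact
  simpa only [Function.comp_def, ← angularFourier_eq_fourier] using
    (Real.zero_at_infty_fourier f).comp hscale

lemma intervalIntegral_exp_neg_I_mul_mul {k : ℝ} (hk : k ≠ 0) (R : ℝ) :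
    ∫ x in (0 : ℝ)..R, Complex.exp (-Complex.I * k * x)
      = (1 - Complex.exp (-Complex.I * k * R)) * (Complex.I * k)⁻¹ := by
  have hk' : (k : ℂ) ≠ 0 := by exact_mod_cast hk
  rw [integral_exp_mul_complex (by simp [hk'])]
  field_simp
  simp

lemma integrable_prod_exp_smul {f : ℝ → E} (hf : Integrable f) (μ : Measure ℝ)
    [IsFiniteMeasure μ] :
    Integrable (fun p : ℝ × ℝ => Complex.exp (-Complex.I * p.2 * p.1) • f p.2)
      (μ.prod volume) :=
  (hf.comp_snd μ).bdd_smul 1 (by fun_prop : Continuous _).aestronglyMeasurable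
    (.of_forall fun p => (norm_exp_neg_I_mul_mul p.2 p.1).le)

lemma intervalIntegral_angularFourier [CompleteSpace E] {f : ℝ → E} (hf : Integrable f)
    (hquot : Integrable fun k : ℝ => (Complex.I * k)⁻¹ • f k) (R : ℝ) :
    ∫ x in (0 : ℝ)..R, angularFourier f x
      = (∫ k : ℝ, (Complex.I * k)⁻¹ • f k)
        - angularFourier (fun k : ℝ => (Complex.I * k)⁻¹ • f k) R := by
  have : IsFiniteMeasure (volume.restrict (Set.uIoc 0 R)) := by
    unfold Set.uIoc; infer_instance
  simp only [angularFourier]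
  rw [intervalIntegral_integral_swap (integrable_prod_exp_smul hf _),
    ← integral_sub hquot (integrable_exp_smul hquot R)]
  refine integral_congr_ae ?_
  filter_upwards [Measure.ae_ne volume (0 : ℝ)] with k hk
  rw [intervalIntegral.integral_smul_const, intervalIntegral_exp_neg_I_mul_mul hk, mul_smul,
    sub_smul, one_smul]

lemma setIntegral_Ioi_angularFourier [CompleteSpace E] {f : ℝ → E} (hf : Integrable f)
    (hquot : Integrable fun k : ℝ => (Complex.I * k)⁻¹ • f k)
    (hF : IntegrableOn (angularFourier f) (Set.Ioi 0)) :
    ∫ x in Set.Ioi (0 : ℝ), angularFourier f x = ∫ k : ℝ, (Complex.I * k)⁻¹ • f k := by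
  refine tendsto_nhds_unique (intervalIntegral_tendsto_integral_Ioi 0 hF tendsto_id) ?_
  simp only [id, intervalIntegral_angularFourier hf hquot]
  simpa only [sub_zero] using
    (tendsto_angularFourier_atTop fun k : ℝ => (Complex.I * k)⁻¹ • f k).const_sub
      (∫ k : ℝ, (Complex.I * k)⁻¹ • f k)

end AngularFourier

section OddQuotient

variable {E : Type*} [NormedAddCommGroup E] [NormedSpace ℂ E]

/-- The odd difference quotient `(f(k) - f(-k)) / (ik)`, which is the symmetrisation of
`2 f(k) / (ik)` under `k ↦ -k`. Its value at `k = 0` is `0`. -/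
noncomputable def oddQuotient (f : ℝ → E) (k : ℝ) : E :=
  (Complex.I * k)⁻¹ • (f k - f (-k))

lemma integral_sign_smul_angularFourier [CompleteSpace E] {f : ℝ → E} (hf : Integrable f)
    (hF : Integrable (angularFourier f)) (hodd : Integrable (oddQuotient f)) :
    ∫ x, Real.sign x • angularFourier f x = ∫ k, oddQuotient f k := by
  have hsub (x : ℝ) : angularFourier f x - angularFourier f (-x)
      = angularFourier (fun k => f k - f (-k)) x := by
    rw [angularFourier_sub hf hf.comp_neg, angularFourier_comp_neg]
  have hFsub : Integrable (angularFourier fun k => f k - f (-k)) :=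
    (hF.sub hF.comp_neg).congr (.of_forall hsub)
  simp only [integral_sign_smul hF, hsub]
  exact setIntegral_Ioi_angularFourier (hf.sub hf.comp_neg) hodd hFsub.integrableOn

lemma integrableOn_inv_I_mul_smul {f : ℝ → E} (hf : Integrable f) {δ : ℝ} (hδ : 0 < δ) :
    IntegrableOn (fun k : ℝ => (Complex.I * k)⁻¹ • f k) {k : ℝ | δ ≤ |k|} := by
  refine hf.integrableOn.bdd_smul δ⁻¹ (by fun_prop : Measurable _).aestronglyMeasurable ?_
  filter_upwards [ae_restrict_mem (measurableSet_le measurable_const (by fun_prop))] with k hk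
  simpa using inv_anti₀ hδ hk

lemma setIntegral_two_div_I_mul_smul {f : ℝ → E} (hf : Integrable f) {δ : ℝ} (hδ : 0 < δ) :
    ∫ k in {k : ℝ | δ ≤ |k|}, (2 / (Complex.I * k)) • f k
      = ∫ k in {k : ℝ | δ ≤ |k|}, oddQuotient f k := by
  have : (volume.restrict {k : ℝ | δ ≤ |k|}).IsNegInvariant :=
    isNegInvariant_restrict (by ext k; simp)
  calc ∫ k in {k : ℝ | δ ≤ |k|}, (2 / (Complex.I * k)) • f k
      = 2 • ∫ k in {k : ℝ | δ ≤ |k|}, (Complex.I * k)⁻¹ • f k := by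
        rw [← ofNat_smul_eq_nsmul ℂ, ← integral_smul]
        simp only [div_eq_mul_inv, mul_smul]
    _ = ∫ k in {k : ℝ | δ ≤ |k|}, ((Complex.I * k)⁻¹ • f k + (Complex.I * ↑(-k))⁻¹ • f (-k)) :=
        (integral_add_comp_neg (integrableOn_inv_I_mul_smul hf hδ)).symm
    _ = ∫ k in {k : ℝ | δ ≤ |k|}, oddQuotient f k := by
        simp only [oddQuotient, smul_sub, ← sub_eq_add_neg, Complex.ofReal_neg, mul_neg, inv_neg,
          neg_smul]

lemma norm_oddQuotient_le {f : ℝ → E} {K : ℝ≥0} (hf : LipschitzWith K f) (k : ℝ) :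
    ‖oddQuotient f k‖ ≤ K * 2 := by
  have hdist : ‖f k - f (-k)‖ ≤ K * 2 * |k| := by
    calc ‖f k - f (-k)‖ ≤ K * ‖k - -k‖ := hf.norm_sub_le k (-k)
      _ = K * 2 * |k| := by rw [sub_neg_eq_add, ← two_mul, norm_mul]; simp [mul_assoc]
  rw [oddQuotient, norm_smul, norm_inv, norm_mul, Complex.norm_I, one_mul, Complex.norm_real,
    Real.norm_eq_abs, inv_mul_eq_div]
  exact div_le_of_le_mul₀ (abs_nonneg k) (by positivity) hdist

lemma integrable_oddQuotient {f : ℝ → E} {K : ℝ≥0} (hf : Integrable f)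
    (hlip : LipschitzWith K f) : Integrable (oddQuotient f) := by
  have houter : IntegrableOn (oddQuotient f) {k : ℝ | 1 ≤ |k|} :=
    integrableOn_inv_I_mul_smul (hf.sub hf.comp_neg) one_pos
  have hmeas : AEStronglyMeasurable (oddQuotient f) :=
    (by fun_prop : Measurable fun k : ℝ => (Complex.I * (k : ℂ))⁻¹).aestronglyMeasurable.smul
      (hf.sub hf.comp_neg).aestronglyMeasurable
  have hinner : IntegrableOn (oddQuotient f) (Metric.ball 0 1) :=
    Measure.integrableOn_of_bounded measure_ball_lt_top.ne hmeas
      (.of_forall (norm_oddQuotient_le hlip))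
  rw [← integrableOn_univ]
  refine (houter.union hinner).mono_set fun k _ => ?_
  simpa using le_or_gt 1 |k|

end OddQuotient

section Schwartz

lemma exists_lipschitzWith_schwartzMap {V F : Type*} [NormedAddCommGroup V] [NormedSpace ℝ V]
    [NormedAddCommGroup F] [NormedSpace ℝ F] (φ : 𝓢(V, F)) : ∃ K : ℝ≥0, LipschitzWith K φ := by
  obtain ⟨C, hC, hbound⟩ := φ.decay 0 1
  refine ⟨⟨C, hC.le⟩, lipschitzWith_of_nnnorm_fderiv_le φ.differentiable fun x => ?_⟩
  have hfderiv : ‖fderiv ℝ φ x‖ ≤ C := by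
    simpa only [pow_zero, one_mul, norm_iteratedFDeriv_one] using hbound x
  exact hfderiv

lemma integrable_angularFourier_schwartzMap {E : Type*} [NormedAddCommGroup E] [NormedSpace ℂ E]
    (φ : 𝓢(ℝ, E)) : Integrable (angularFourier φ) := by
  have hscaled : Integrable fun x : ℝ => 𝓕 φ (x / (2 * π)) :=
    (𝓕 φ).integrable.comp_div (by positivity)
  simpa only [SchwartzMap.fourier_coe, ← angularFourier_eq_fourier] using hscaled

lemma integrable_oddQuotient_schwartzMap {E : Type*} [NormedAddCommGroup E] [NormedSpace ℂ E]
    (φ : 𝓢(ℝ, E)) : Integrable (oddQuotient φ) :=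
  have ⟨_, hlip⟩ := exists_lipschitzWith_schwartzMap φ
  integrable_oddQuotient φ.integrable hlip

end Schwartz

theorem stmt_14_general {E : Type*} [NormedAddCommGroup E] [NormedSpace ℂ E] [CompleteSpace E]
    {f : ℝ → E} (hf : Integrable f) (hF : Integrable (angularFourier f))
    (hodd : Integrable (oddQuotient f)) :
    Tendsto (fun δ : ℝ => ∫ k in {k : ℝ | δ ≤ |k|}, (2 / (Complex.I * k)) • f k) (𝓝[>] 0)
      (𝓝 (∫ x, Real.sign x • angularFourier f x)) := by
  rw [integral_sign_smul_angularFourier hf hF hodd]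
  refine ((aecover_le_norm volume).integral_tendsto_of_countably_generated hodd).congr' ?_
  filter_upwards [self_mem_nhdsWithin] with δ hδ
  exact (setIntegral_two_div_I_mul_smul hf hδ).symm

theorem stmt_14 (φ : SchwartzMap ℝ ℂ) :
    Filter.Tendsto
      (fun δ : ℝ => ∫ k in {k : ℝ | δ ≤ |k|}, (2 / (Complex.I * k)) * φ k)
      (nhdsWithin 0 (Set.Ioi 0))
      (nhds (∫ x : ℝ,
        (Real.sign x : ℂ) * ∫ k : ℝ, φ k * Complex.exp (-Complex.I * k * x))) := by
  simpa [angularFourier, mul_comm] using stmt_14_general φ.integrable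
    (integrable_angularFourier_schwartzMap φ) (integrable_oddQuotient_schwartzMap φ)
end

section
/- The function x ↦ sin³(x)/x² is Lebesgue integrable on (0,∞) and ∫_0^∞ sin³(x)/x² dx = (3/4)·ln 3. -/
open MeasureTheory Real

/-!
Since `4 sin³ x = 3 sin x - sin 3x`, the integrand is the Frullani integrand
`(3/4) x⁻¹ (sinc x - sinc 3x)`. As `sinc` has value `1` at `0` and tends to `0` at infinity,
Frullani's formula gives `(3/4) log 3`. Frullani's formula only computes a Lebesgue integral that is
known to exist; here the numerator is `O(x)` at `0`, because `sinc` is Lipschitz there, and `O(1/x)`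
at infinity, because `sinc` decays like `1/x`.
-/

section Frullani

open Set

variable {E : Type*} [NormedAddCommGroup E] [NormedSpace ℝ E] {f : ℝ → E} {L R : E}
  {A B a b : ℝ}

theorem norm_inv_smul_comp_mul_sub_comp_mul_le
    (hL : ∀ x > 0, ‖f x - L‖ ≤ A * x) (hR : ∀ x > 0, ‖f x - R‖ ≤ B / x)
    (ha : 0 < a) (hb : 0 < b) {x : ℝ} (hx : 0 < x) :
    ‖x⁻¹ • (f (a * x) - f (b * x))‖ ≤ (A * (a + b) + B * (a⁻¹ + b⁻¹)) * (1 + x ^ 2)⁻¹ := by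
  have hax := mul_pos ha hx
  have hbx := mul_pos hb hx
  have triangle (c : E) : ‖f (a * x) - f (b * x)‖ ≤ ‖f (a * x) - c‖ + ‖f (b * x) - c‖ := by
    simpa only [dist_eq_norm] using dist_triangle_right (f (a * x)) (f (b * x)) c
  have near : ‖f (a * x) - f (b * x)‖ ≤ A * (a * x) + A * (b * x) :=
    (triangle L).trans (add_le_add (hL _ hax) (hL _ hbx))
  have far : ‖f (a * x) - f (b * x)‖ ≤ B / (a * x) + B / (b * x) :=
    (triangle R).trans (add_le_add (hR _ hax) (hR _ hbx))
  rw [norm_smul, norm_of_nonneg (inv_nonneg.2 hx.le), ← div_eq_mul_inv,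
    le_div_iff₀ (by positivity)]
  calc x⁻¹ * ‖f (a * x) - f (b * x)‖ * (1 + x ^ 2)
      = x⁻¹ * ‖f (a * x) - f (b * x)‖ + x * ‖f (a * x) - f (b * x)‖ := by field_simp
    _ ≤ x⁻¹ * (A * (a * x) + A * (b * x)) + x * (B / (a * x) + B / (b * x)) := by gcongr
    _ = A * (a + b) + B * (a⁻¹ + b⁻¹) := by field_simp

theorem integrableOn_Ioi_inv_smul_comp_mul_sub_comp_mul (hf : StronglyMeasurable f)
    (hL : ∀ x > 0, ‖f x - L‖ ≤ A * x) (hR : ∀ x > 0, ‖f x - R‖ ≤ B / x)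
    (ha : 0 < a) (hb : 0 < b) :
    IntegrableOn (fun x ↦ x⁻¹ • (f (a * x) - f (b * x))) (Ioi 0) := by
  have hmeas : StronglyMeasurable fun x ↦ x⁻¹ • (f (a * x) - f (b * x)) :=
    measurable_inv.stronglyMeasurable.smul
      ((hf.comp_measurable (measurable_const_mul a)).sub
        (hf.comp_measurable (measurable_const_mul b)))
  refine (integrable_inv_one_add_sq.const_mul (A * (a + b) + B * (a⁻¹ + b⁻¹))).integrableOn.mono'
    hmeas.aestronglyMeasurable ?_
  filter_upwards [ae_restrict_mem measurableSet_Ioi] with x hx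
  exact norm_inv_smul_comp_mul_sub_comp_mul_le hL hR ha hb hx

end Frullani

section Sinc

open Bornology Filter Set Topology

theorem abs_sinc_le_inv_abs {x : ℝ} (hx : x ≠ 0) : |sinc x| ≤ |x|⁻¹ := by
  rw [sinc_of_ne_zero hx, abs_div, ← one_div]
  gcongr
  exact abs_sin_le_one x

theorem tendsto_sinc_cobounded : Tendsto sinc (cobounded ℝ) (𝓝 0) := by
  refine squeeze_zero_norm' ?_ tendsto_norm_cobounded_atTop.inv_tendsto_atTop
  filter_upwards [eventually_ne_cobounded 0] with x hx
  exact abs_sinc_le_inv_abs hx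

theorem abs_sinc_sub_one_le_sq_div_six (x : ℝ) : |sinc x - 1| ≤ x ^ 2 / 6 := by
  obtain rfl | hx := eq_or_ne x 0
  · simp
  calc |sinc x - 1| = |x - sin x| / |x| := by
        rw [sinc_of_ne_zero hx, ← abs_div, sub_div, div_self hx, abs_sub_comm]
    _ ≤ |x| ^ 3 / 6 / |x| := by gcongr; exact abs_sub_sin_le x
    _ = x ^ 2 / 6 := by rw [← sq_abs x]; field_simp

theorem abs_sinc_sub_one_le_abs (x : ℝ) : |sinc x - 1| ≤ |x| := by
  have hquad : |sinc x - 1| ≤ |x| ^ 2 / 6 := by simpa using abs_sinc_sub_one_le_sq_div_six x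
  have htwo : |sinc x - 1| ≤ 2 :=
    abs_le.2 ⟨by linarith [neg_one_le_sinc x], by linarith [sinc_le_one x]⟩
  obtain hx | hx := le_total |x| 2
  · nlinarith [abs_nonneg x]
  · exact htwo.trans hx

variable {a b : ℝ}

theorem integrableOn_Ioi_inv_mul_sinc_sub_sinc (ha : 0 < a) (hb : 0 < b) :
    IntegrableOn (fun x ↦ x⁻¹ * (sinc (a * x) - sinc (b * x))) (Ioi 0) := by
  refine integrableOn_Ioi_inv_smul_comp_mul_sub_comp_mul (L := 1) (R := 0) (A := 1) (B := 1)
    stronglyMeasurable_sinc (fun x hx ↦ ?_) (fun x hx ↦ ?_) ha hb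
  · simpa [abs_of_pos hx] using abs_sinc_sub_one_le_abs x
  · simpa [abs_of_pos hx] using abs_sinc_le_inv_abs hx.ne'

theorem integral_Ioi_inv_mul_sinc_sub_sinc (ha : 0 < a) (hb : 0 < b) :
    ∫ x in Ioi 0, x⁻¹ * (sinc (a * x) - sinc (b * x)) = log (b / a) := by
  have at_zero : Tendsto sinc (𝓝[>] 0) (𝓝 1) :=
    (continuous_sinc.tendsto' 0 1 sinc_zero).mono_left nhdsWithin_le_nhds
  have at_top : Tendsto sinc atTop (𝓝 0) :=
    tendsto_sinc_cobounded.mono_left IsOrderBornology.atTop_le_cobounded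
  simpa using Frullani.integral_Ioi_eq (continuous_sinc.locallyIntegrable.locallyIntegrableOn _)
    ha hb at_zero at_top (integrableOn_Ioi_inv_mul_sinc_sub_sinc ha hb)

theorem sin_pow_three_div_sq_eq_inv_mul_sinc_sub_sinc (x : ℝ) :
    sin x ^ 3 / x ^ 2 = 3 / 4 * (x⁻¹ * (sinc (1 * x) - sinc (3 * x))) := by
  obtain rfl | hx := eq_or_ne x 0
  · simp
  rw [one_mul, sinc_of_ne_zero hx, sinc_of_ne_zero (by positivity), sin_three_mul]
  field_simp
  ring

end Sinc

theorem stmt_15 :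
    IntegrableOn (fun x : ℝ => Real.sin x ^ 3 / x ^ 2) (Set.Ioi 0) ∧
    ∫ x in Set.Ioi (0 : ℝ), Real.sin x ^ 3 / x ^ 2 = 3 / 4 * Real.log 3 := by
  simp only [sin_pow_three_div_sq_eq_inv_mul_sinc_sub_sinc]
  refine ⟨(integrableOn_Ioi_inv_mul_sinc_sub_sinc one_pos three_pos).const_mul _, ?_⟩
  rw [integral_const_mul, integral_Ioi_inv_mul_sinc_sub_sinc one_pos three_pos, div_one]
end

section
/- The function x ↦ sin⁴(x)/x³ is Lebesgue integrable on (0,∞) and ∫_0^∞ sin⁴(x)/x³ dx = ln 2. -/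
open MeasureTheory Real

open Filter Set Topology

/-!
By the duplication formula `sinc (2x) = sinc x * cos x`, the integrand is the Frullani integrand
`(f x - f (2x)) / x` of `f = sinc²`. Since `f → 1` at `0` and `f → 0` at `∞`, Frullani's integral
has value `(1 - 0) * log 2`. Integrability comes from `(1 + x²) sinc² x = sinc² x + sin² x ≤ 2`.
-/

theorem mul_sinc (x : ℝ) : x * sinc x = sin x := by
  rcases eq_or_ne x 0 with rfl | hx
  · simp
  · rw [sinc_of_ne_zero hx, mul_div_cancel₀ _ hx]

theorem sinc_two_mul (x : ℝ) : sinc (2 * x) = sinc x * cos x := by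
  rcases eq_or_ne x 0 with rfl | hx
  · simp
  · rw [sinc_of_ne_zero hx, sinc_of_ne_zero (by positivity), sin_two_mul]
    field

theorem sinc_sq_sub_sinc_two_mul_sq (x : ℝ) :
    sinc x ^ 2 - sinc (2 * x) ^ 2 = sinc x ^ 2 * sin x ^ 2 := by
  rw [sinc_two_mul, sin_sq]
  ring

theorem sin_pow_four_div_pow_three_eq (x : ℝ) :
    sin x ^ 4 / x ^ 3 = x⁻¹ * (sinc x ^ 2 - sinc (2 * x) ^ 2) := by
  rcases eq_or_ne x 0 with rfl | hx
  · simp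
  · rw [sinc_sq_sub_sinc_two_mul_sq, sinc_of_ne_zero hx]
    field

theorem tendsto_sinc_atTop : Tendsto sinc atTop (𝓝 0) := by
  refine squeeze_zero_norm' ?_ tendsto_inv_atTop_zero
  filter_upwards [eventually_gt_atTop 0] with x hx
  rw [sinc_of_ne_zero hx.ne', norm_div, norm_of_nonneg hx.le, ← one_div]
  gcongr
  exact abs_sin_le_one x

theorem sinc_sq_le_two_mul_inv_one_add_sq (x : ℝ) : sinc x ^ 2 ≤ 2 * (1 + x ^ 2)⁻¹ := by
  rw [← div_eq_mul_inv, le_div_iff₀ (by positivity)]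
  calc sinc x ^ 2 * (1 + x ^ 2) = sinc x ^ 2 + sin x ^ 2 := by rw [← mul_sinc x]; ring
    _ ≤ 1 + 1 := add_le_add ((sq_le_one_iff_abs_le_one _).2 (abs_sinc_le_one x)) (sin_sq_le_one x)
    _ = 2 := one_add_one_eq_two

theorem integrable_sinc_sq : Integrable fun x ↦ sinc x ^ 2 := by
  refine (integrable_inv_one_add_sq.const_mul 2).mono' (by fun_prop) (.of_forall fun x ↦ ?_)
  rw [norm_of_nonneg (sq_nonneg _)]
  exact sinc_sq_le_two_mul_inv_one_add_sq x

theorem abs_sin_pow_div_pow_le_sinc_sq {m n : ℕ} (hn : 2 ≤ n) (hnm : n ≤ m) (x : ℝ) :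
    |sin x ^ m / x ^ n| ≤ sinc x ^ 2 := by
  rcases eq_or_ne x 0 with rfl | hx
  · simp [show n ≠ 0 by lia]
  calc |sin x ^ m / x ^ n| = |sinc x| ^ n * |sin x| ^ (m - n) := by
        rw [sinc_of_ne_zero hx, abs_div, abs_div, abs_pow, abs_pow, div_pow, div_mul_eq_mul_div,
          pow_mul_pow_sub _ hnm]
    _ ≤ |sinc x| ^ 2 * 1 := by
        gcongr ?_ * ?_
        · exact pow_le_pow_of_le_one (abs_nonneg _) (abs_sinc_le_one x) hn
        · exact pow_le_one₀ (abs_nonneg _) (abs_sin_le_one x)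
    _ = sinc x ^ 2 := by rw [mul_one, sq_abs]

theorem integrable_sin_pow_div_pow {m n : ℕ} (hn : 2 ≤ n) (hnm : n ≤ m) :
    Integrable fun x : ℝ ↦ sin x ^ m / x ^ n :=
  integrable_sinc_sq.mono' (Measurable.aestronglyMeasurable (by fun_prop))
    (.of_forall (abs_sin_pow_div_pow_le_sinc_sq hn hnm))

theorem stmt_16 :
    IntegrableOn (fun x : ℝ => Real.sin x ^ 4 / x ^ 3) (Set.Ioi 0) ∧
    ∫ x in Set.Ioi (0 : ℝ), Real.sin x ^ 4 / x ^ 3 = Real.log 2 := by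
  have integrable_integrand : IntegrableOn (fun x : ℝ ↦ sin x ^ 4 / x ^ 3) (Ioi 0) :=
    (integrable_sin_pow_div_pow (by norm_num) (by norm_num)).integrableOn
  have integrand_eq : (fun x : ℝ ↦ sin x ^ 4 / x ^ 3) =
      fun x ↦ x⁻¹ • (sinc (1 * x) ^ 2 - sinc (2 * x) ^ 2) := by
    simpa only [one_mul, smul_eq_mul] using funext sin_pow_four_div_pow_three_eq
  have continuous_sinc_sq : Continuous fun x ↦ sinc x ^ 2 := continuous_sinc.pow 2
  have sinc_sq_tendsto_one : Tendsto (fun x ↦ sinc x ^ 2) (𝓝[>] 0) (𝓝 1) :=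
    (continuous_sinc_sq.tendsto' 0 1 (by simp)).mono_left nhdsWithin_le_nhds
  have sinc_sq_tendsto_zero : Tendsto (fun x ↦ sinc x ^ 2) atTop (𝓝 0) := by
    simpa using tendsto_sinc_atTop.pow 2
  refine ⟨integrable_integrand, ?_⟩
  rw [integrand_eq] at integrable_integrand ⊢
  calc ∫ x in Ioi (0 : ℝ), x⁻¹ • (sinc (1 * x) ^ 2 - sinc (2 * x) ^ 2)
      = log (2 / 1) • (1 - 0) :=
        Frullani.integral_Ioi_eq (continuous_sinc_sq.locallyIntegrable.locallyIntegrableOn _)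
          one_pos two_pos sinc_sq_tendsto_one sinc_sq_tendsto_zero integrable_integrand
    _ = log 2 := by simp
end

section
/- The function x ↦ sin⁵(x)/x⁴ is Lebesgue integrable on (0,∞) and ∫_0^∞ sin⁵(x)/x⁴ dx = (125/96)·ln 5 − (45/32)·ln 3. -/
open MeasureTheory Real

/-!
Expanding `sin⁵ x` into `sin x`, `sin (3 * x)`, `sin (5 * x)` gives coefficients `cᵢ` and
frequencies `aᵢ` with `∑ cᵢ aᵢ = ∑ cᵢ aᵢ³ = 0`. The first relation allows `sin (aᵢ x)` to be
replaced by `sin (aᵢ x) - aᵢ x`, so that, with `f y = (sin y - y) / y³`, the integrand is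
`x⁻¹ * ∑ cᵢ aᵢ³ f (aᵢ x)`. Since the weights `cᵢ aᵢ³` also sum to zero, this is a combination of the
Frullani integrands `x⁻¹ * (f (aᵢ x) - f x)`, where `f` tends to `-1/6` at `0` and to `0` at `∞`.
-/

open Set Filter Topology Asymptotics

section IsBigO

variable {E : Type*} [NormedAddCommGroup E] {f : ℝ → E} {l : Filter ℝ} {a b r : ℝ}

theorem isBigO_rpow_comp_mul_left (hf : f =O[l] (· ^ r)) (ha : 0 ≤ a)
    (hal : Tendsto (a * ·) l l) (hl : ∀ᶠ x in l, 0 ≤ x) :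
    (fun x ↦ f (a * x)) =O[l] (· ^ r) := by
  have hscale : (fun x ↦ a ^ r * x ^ r) =ᶠ[l] fun x ↦ (a * x) ^ r := by
    filter_upwards [hl] with x hx using (mul_rpow ha hx).symm
  exact (hf.comp_tendsto hal).trans ((isBigO_const_mul_self (a ^ r) _ l).congr' hscale .rfl)

theorem isBigO_rpow_comp_mul_sub_comp_mul {V : E} (hf : (f · - V) =O[l] (· ^ r))
    (ha : 0 ≤ a) (hb : 0 ≤ b) (hal : Tendsto (a * ·) l l) (hbl : Tendsto (b * ·) l l)
    (hl : ∀ᶠ x in l, 0 ≤ x) :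
    (fun x ↦ f (a * x) - f (b * x)) =O[l] (· ^ r) := by
  simpa using (isBigO_rpow_comp_mul_left hf ha hal hl).sub (isBigO_rpow_comp_mul_left hf hb hbl hl)

end IsBigO

section Frullani

variable {E : Type*} [NormedAddCommGroup E] [NormedSpace ℝ E] {f : ℝ → E} {a b p q : ℝ} {L R : E}

theorem locallyIntegrableOn_Ioi_comp_mul_left (hf : LocallyIntegrableOn f (Ioi 0)) (ha : 0 < a) :
    LocallyIntegrableOn (fun x ↦ f (a * x)) (Ioi 0) := by
  rw [locallyIntegrableOn_iff isOpen_Ioi.isLocallyClosed]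
  intro k hk hk_compact
  have himage : IntegrableOn f ((a * ·) '' k) :=
    hf.integrableOn_compact_subset (by rintro _ ⟨x, hx, rfl⟩; exact mul_pos ha (hk hx))
      (hk_compact.image (continuous_const_mul a))
  have hderiv : ∀ x ∈ k, HasDerivWithinAt (a * ·) a k x := fun x _ ↦ by
    simpa using (hasDerivWithinAt_id x k).const_mul a
  rw [integrableOn_image_iff_integrableOn_abs_deriv_smul hk_compact.measurableSet hderiv
    (mul_right_injective₀ ha.ne').injOn] at himage
  exact (integrable_fun_smul_iff (abs_pos.2 ha.ne').ne' _).1 himage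

theorem integrableOn_Ioi_inv_smul_of_isBigO (hf : LocallyIntegrableOn f (Ioi 0))
    (hp : 0 < p) (hf_zero : f =O[𝓝[>] 0] (· ^ p)) (hq : 0 < q) (hf_top : f =O[atTop] (· ^ (-q))) :
    IntegrableOn (fun x ↦ x⁻¹ • f x) (Ioi 0) := by
  have hnorm : IntegrableOn (fun x : ℝ ↦ x ^ ((0 : ℝ) - 1) * ‖f x‖) (Ioi 0) :=
    mellin_convergent_of_isBigO_scalar (a := q) (b := -p) hf.norm hf_top.norm_left hq
      (by simpa using hf_zero.norm_left) (neg_lt_zero.2 hp)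
  refine Integrable.mono hnorm (measurable_inv.aestronglyMeasurable.smul hf.aestronglyMeasurable)
    (.of_forall fun x ↦ ?_)
  simp [norm_smul, rpow_neg_one]

theorem integrableOn_Ioi_frullani_of_isBigO (hf : LocallyIntegrableOn f (Ioi 0))
    (ha : 0 < a) (hb : 0 < b) (hp : 0 < p) (hL : (f · - L) =O[𝓝[>] 0] (· ^ p))
    (hq : 0 < q) (hR : (f · - R) =O[atTop] (· ^ (-q))) :
    IntegrableOn (fun x ↦ x⁻¹ • (f (a * x) - f (b * x))) (Ioi 0) := by
  have hloc : LocallyIntegrableOn (fun x ↦ f (a * x) - f (b * x)) (Ioi 0) :=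
    (locallyIntegrableOn_Ioi_comp_mul_left hf ha).sub (locallyIntegrableOn_Ioi_comp_mul_left hf hb)
  have hscale {c : ℝ} (hc : 0 < c) : Tendsto (c * ·) (𝓝[>] 0) (𝓝[>] 0) :=
    tendsto_iff_comap.2 (comap_mulLeft_nhdsGT_zero hc).ge
  have hzero : (fun x ↦ f (a * x) - f (b * x)) =O[𝓝[>] 0] (· ^ p) :=
    isBigO_rpow_comp_mul_sub_comp_mul hL ha.le hb.le (hscale ha) (hscale hb)
      (eventually_mem_nhdsWithin.mono fun _ hx ↦ le_of_lt hx)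
  have htop : (fun x ↦ f (a * x) - f (b * x)) =O[atTop] (· ^ (-q)) :=
    isBigO_rpow_comp_mul_sub_comp_mul hR ha.le hb.le (tendsto_id.const_mul_atTop ha)
      (tendsto_id.const_mul_atTop hb) (eventually_ge_atTop 0)
  exact integrableOn_Ioi_inv_smul_of_isBigO hloc hp hzero hq htop

end Frullani

section WeightedFrullani

variable {E ι : Type*} [NormedAddCommGroup E] [NormedSpace ℝ E] {f : ℝ → E} {L R : E}
  {s : Finset ι} {w a : ι → ℝ}

theorem inv_smul_sum_smul_comp_mul_eq (hw : ∑ i ∈ s, w i = 0) (x : ℝ) :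
    x⁻¹ • ∑ i ∈ s, w i • f (a i * x) =
      ∑ i ∈ s, w i • x⁻¹ • (f (a i * x) - f x) := by
  simp only [smul_comm (w _) x⁻¹, ← Finset.smul_sum, smul_sub, Finset.sum_sub_distrib,
    ← Finset.sum_smul, hw, zero_smul, smul_zero, sub_zero]

theorem integrableOn_Ioi_inv_smul_sum (hw : ∑ i ∈ s, w i = 0)
    (hint : ∀ i ∈ s, IntegrableOn (fun x ↦ x⁻¹ • (f (a i * x) - f x)) (Ioi 0)) :
    IntegrableOn (fun x ↦ x⁻¹ • ∑ i ∈ s, w i • f (a i * x)) (Ioi 0) := by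
  simp only [inv_smul_sum_smul_comp_mul_eq hw]
  exact integrable_finsetSum s fun i hi ↦ (hint i hi).smul (w i)

theorem integral_Ioi_inv_smul_sum [CompleteSpace E] (hf : LocallyIntegrableOn f (Ioi 0))
    (hL : Tendsto f (𝓝[>] 0) (𝓝 L)) (hR : Tendsto f atTop (𝓝 R))
    (hw : ∑ i ∈ s, w i = 0) (ha : ∀ i ∈ s, 0 < a i)
    (hint : ∀ i ∈ s, IntegrableOn (fun x ↦ x⁻¹ • (f (a i * x) - f x)) (Ioi 0)) :
    ∫ x in Ioi 0, x⁻¹ • ∑ i ∈ s, w i • f (a i * x) = (∑ i ∈ s, w i * log (a i)) • (R - L) := by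
  simp only [inv_smul_sum_smul_comp_mul_eq hw]
  rw [integral_finsetSum s fun i hi ↦ (hint i hi).fun_smul (w i), Finset.sum_smul]
  refine Finset.sum_congr rfl fun i hi ↦ ?_
  have hfrullani : ∫ x in Ioi 0, x⁻¹ • (f (a i * x) - f x) =
      log (1 / a i) • (L - R) := by
    simpa only [one_mul] using Frullani.integral_Ioi_eq hf (ha i hi) one_pos hL hR
      (by simpa only [one_mul] using hint i hi)
  rw [integral_smul, hfrullani, one_div, log_inv, neg_smul, ← smul_neg, neg_sub, mul_smul]

end WeightedFrullani

/-- The cubic Taylor quotient of `sin` at `0`, the function to which Frullani's formula is applied.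
Only its values on `(0, ∞)` matter; at `0` it takes the junk value `0` rather than `-1/6`. -/
noncomputable def sinCubicQuotient (y : ℝ) : ℝ := (sin y - y) / y ^ 3

namespace sinCubicQuotient

theorem locallyIntegrableOn_Ioi : LocallyIntegrableOn sinCubicQuotient (Ioi 0) := by
  refine ContinuousOn.locallyIntegrableOn ?_ measurableSet_Ioi
  exact ContinuousOn.div (by fun_prop) (by fun_prop) fun x hx ↦ (pow_pos hx 3).ne'

theorem sub_isBigO_nhdsGT_zero :
    (sinCubicQuotient · - (-1 / 6)) =O[𝓝[>] 0] (· ^ (2 : ℝ)) := by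
  refine .of_bound (1 / 100) ?_
  filter_upwards [Ioc_mem_nhdsGT (zero_lt_one' ℝ)] with x ⟨hx_pos, hx_le⟩
  have htaylor : |sin x - (x - x ^ 3 / 6)| ≤ x ^ 5 / 100 := by
    simpa only [abs_of_pos hx_pos] using sin_bound (abs_le.2 ⟨by linarith, hx_le⟩)
  have hquot : sinCubicQuotient x - (-1 / 6) = (sin x - (x - x ^ 3 / 6)) / x ^ 3 := by
    unfold sinCubicQuotient
    field_simp
    ring
  rw [hquot, rpow_two, norm_div, norm_eq_abs, norm_of_nonneg (pow_pos hx_pos 3).le,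
    norm_of_nonneg (sq_nonneg x), div_le_iff₀ (pow_pos hx_pos 3)]
  exact htaylor.trans_eq (by ring)

theorem isBigO_atTop : sinCubicQuotient =O[atTop] (· ^ (-2 : ℝ)) := by
  refine .of_bound 2 ?_
  filter_upwards [eventually_gt_atTop 0] with x hx
  have hnum : |sin x - x| ≤ 2 * x := by
    calc |sin x - x| ≤ |sin x| + |x| := abs_sub _ _
      _ ≤ |x| + |x| := add_le_add abs_sin_le_abs le_rfl
      _ = 2 * x := by rw [abs_of_pos hx, two_mul]
  rw [sinCubicQuotient, norm_div, norm_eq_abs, norm_of_nonneg (pow_pos hx 3).le,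
    norm_of_nonneg (rpow_nonneg hx.le _), div_le_iff₀ (pow_pos hx 3), rpow_neg hx.le, rpow_two]
  exact hnum.trans_eq (by field_simp)

theorem tendsto_nhdsGT_zero : Tendsto sinCubicQuotient (𝓝[>] 0) (𝓝 (-1 / 6)) := by
  have hsq : Tendsto (fun x : ℝ ↦ x ^ (2 : ℝ)) (𝓝[>] 0) (𝓝 0) := by
    simpa using ((continuous_pow 2).tendsto (0 : ℝ)).mono_left nhdsWithin_le_nhds
  exact tendsto_sub_nhds_zero_iff.1 (sub_isBigO_nhdsGT_zero.trans_tendsto hsq)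

theorem tendsto_atTop : Tendsto sinCubicQuotient atTop (𝓝 0) :=
  isBigO_atTop.trans_tendsto (tendsto_rpow_neg_atTop two_pos)

theorem integrableOn_Ioi_frullani {a : ℝ} (ha : 0 < a) :
    IntegrableOn (fun x ↦ x⁻¹ • (sinCubicQuotient (a * x) - sinCubicQuotient x)) (Ioi 0) := by
  simpa only [one_mul] using integrableOn_Ioi_frullani_of_isBigO (R := 0) locallyIntegrableOn_Ioi
    ha one_pos two_pos sub_isBigO_nhdsGT_zero two_pos (by simpa only [sub_zero] using isBigO_atTop)

end sinCubicQuotient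

section SinSum

variable {ι : Type*} {s : Finset ι} {c a : ι → ℝ}

theorem sum_mul_sin_div_pow_four_eq (ha : ∀ i ∈ s, a i ≠ 0) (hlin : ∑ i ∈ s, c i * a i = 0)
    {x : ℝ} (hx : x ≠ 0) :
    (∑ i ∈ s, c i * sin (a i * x)) / x ^ 4 =
      x⁻¹ • ∑ i ∈ s, (c i * a i ^ 3) • sinCubicQuotient (a i * x) := by
  have hsub : ∑ i ∈ s, c i * sin (a i * x) = ∑ i ∈ s, c i * (sin (a i * x) - a i * x) := by
    simp only [mul_sub, Finset.sum_sub_distrib, ← mul_assoc, ← Finset.sum_mul, hlin, zero_mul,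
      sub_zero]
  rw [hsub, Finset.sum_div, Finset.smul_sum]
  refine Finset.sum_congr rfl fun i hi ↦ ?_
  have := ha i hi
  simp only [sinCubicQuotient, smul_eq_mul]
  field_simp

theorem integrableOn_Ioi_sum_mul_sin_div_pow_four (ha : ∀ i ∈ s, 0 < a i)
    (hlin : ∑ i ∈ s, c i * a i = 0) (hcub : ∑ i ∈ s, c i * a i ^ 3 = 0) :
    IntegrableOn (fun x ↦ (∑ i ∈ s, c i * sin (a i * x)) / x ^ 4) (Ioi 0) := by
  refine (integrableOn_Ioi_inv_smul_sum hcub fun i hi ↦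
    sinCubicQuotient.integrableOn_Ioi_frullani (ha i hi)).congr_fun (fun x hx ↦ ?_)
    measurableSet_Ioi
  exact (sum_mul_sin_div_pow_four_eq (fun i hi ↦ (ha i hi).ne') hlin (ne_of_gt hx)).symm

theorem integral_Ioi_sum_mul_sin_div_pow_four (ha : ∀ i ∈ s, 0 < a i)
    (hlin : ∑ i ∈ s, c i * a i = 0) (hcub : ∑ i ∈ s, c i * a i ^ 3 = 0) :
    ∫ x in Ioi 0, (∑ i ∈ s, c i * sin (a i * x)) / x ^ 4 =
      (∑ i ∈ s, c i * a i ^ 3 * log (a i)) / 6 := by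
  rw [setIntegral_congr_fun measurableSet_Ioi fun x hx ↦
      sum_mul_sin_div_pow_four_eq (fun i hi ↦ (ha i hi).ne') hlin (ne_of_gt hx),
    integral_Ioi_inv_smul_sum sinCubicQuotient.locallyIntegrableOn_Ioi
      sinCubicQuotient.tendsto_nhdsGT_zero sinCubicQuotient.tendsto_atTop hcub ha fun i hi ↦
        sinCubicQuotient.integrableOn_Ioi_frullani (ha i hi), smul_eq_mul]
  ring

end SinSum

theorem sin_five_mul (x : ℝ) : sin (5 * x) = 16 * sin x ^ 5 - 20 * sin x ^ 3 + 5 * sin x := by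
  rw [show 5 * x = 3 * x + 2 * x by ring, sin_add, sin_three_mul, cos_three_mul, sin_two_mul,
    cos_two_mul]
  grind [cos_sq' x]

theorem sin_pow_five (x : ℝ) :
    sin x ^ 5 = 5 / 8 * sin x - 5 / 16 * sin (3 * x) + 1 / 16 * sin (5 * x) := by
  rw [sin_five_mul, sin_three_mul]
  ring

theorem stmt_17 :
    IntegrableOn (fun x : ℝ => Real.sin x ^ 5 / x ^ 4) (Set.Ioi 0) ∧
    ∫ x in Set.Ioi (0 : ℝ), Real.sin x ^ 5 / x ^ 4 =
      125 / 96 * Real.log 5 - 45 / 32 * Real.log 3 := by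
  let c : Fin 3 → ℝ := ![5 / 8, -5 / 16, 1 / 16]
  let a : Fin 3 → ℝ := ![1, 3, 5]
  have hexpand (x : ℝ) : sin x ^ 5 = ∑ i, c i * sin (a i * x) := by
    simp only [sin_pow_five, Fin.sum_univ_three, c, a, Matrix.cons_val, one_mul]
    ring
  have ha : ∀ i ∈ Finset.univ, 0 < a i := by simp [Fin.forall_fin_succ, a]
  have hlin : ∑ i, c i * a i = 0 := by norm_num [Fin.sum_univ_succ, c, a]
  have hcub : ∑ i, c i * a i ^ 3 = 0 := by norm_num [Fin.sum_univ_succ, c, a]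
  simp only [hexpand]
  refine ⟨integrableOn_Ioi_sum_mul_sin_div_pow_four ha hlin hcub, ?_⟩
  rw [integral_Ioi_sum_mul_sin_div_pow_four ha hlin hcub]
  simp only [Fin.sum_univ_three, c, a, Matrix.cons_val, log_one]
  ring
end

section
/- The function x ↦ sin⁶(x)/x⁶ is Lebesgue integrable on ℝ and ∫_ℝ sin⁶(x)/x⁶ dx = (11/20)·π. -/
open MeasureTheory Real

/-!
For `x > 0`, Euler's integral gives `n! / x ^ (n + 1) = ∫₀^∞ t ^ n e ^ (-t x) dt`. Inserting this
and exchanging the integrals turns `∫₀^∞ sin x ^ (2 k + 2) / x ^ (2 k + 2) dx` into a moment of the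
Laplace transform of `sin ^ (2 k + 2)`. Two integrations by parts express that transform through the
one of `sin ^ (2 k)`, so it is the rational function
`(2 k + 2)! / (t (t² + 2²) (t² + 4²) ⋯ (t² + (2 k + 2)²))`, and only the integral of a rational
function remains. For `k = 2` it is evaluated by partial fractions.
-/

open Set Filter Topology
open scoped Nat

section Even

lemma integrable_of_even_of_integrableOn_Ioi {E : Type*} [NormedAddCommGroup E] {f : ℝ → E}
    (hf : f.Even) (hint : IntegrableOn f (Ioi 0)) : Integrable f := by
  have hleft : IntegrableOn f (Iic 0) := by
    have h := IntegrableOn.comp_neg_Iic (c := (0 : ℝ)) (μ := volume) (f := f)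
      (by rwa [neg_zero, integrableOn_Ici_iff_integrableOn_Ioi])
    simpa only [hf.eq] using h
  rw [← integrableOn_univ, ← Iic_union_Ioi (a := (0 : ℝ))]
  exact hleft.union hint

lemma integral_eq_two_mul_integral_Ioi_of_even {f : ℝ → ℝ} (hf : f.Even) :
    ∫ x, f x = 2 * ∫ x in Ioi 0, f x := by
  have hf_abs (x : ℝ) : f |x| = f x := by
    rcases abs_choice x with h | h <;> simp only [h, hf.eq]
  simpa only [hf_abs] using integral_comp_abs (f := f)

end Even

section Laplace

variable {E : Type*} [NormedAddCommGroup E] [NormedSpace ℝ E]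

/-- The Laplace transform `t ↦ ∫₀^∞ e ^ (-t x) f x dx` of a function on the positive half-line,
with value `0` where the integral does not converge absolutely. -/
noncomputable def laplaceTransform (f : ℝ → E) (t : ℝ) : E :=
  ∫ x in Ioi 0, exp (-(t * x)) • f x

lemma integral_Ioi_pow_mul_exp_neg_mul (n : ℕ) {x : ℝ} (hx : 0 < x) :
    ∫ t in Ioi 0, t ^ n * exp (-(t * x)) = n ! / x ^ (n + 1) := by
  have h := integral_rpow_mul_exp_neg_mul_Ioi (a := n + 1) (by positivity) hx
  rw [Gamma_nat_eq_factorial, add_sub_cancel_right, ← Nat.cast_add_one] at h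
  simp only [rpow_natCast] at h
  simp only [mul_comm _ x, h, one_div_pow, one_div_mul_eq_div]

variable {f : ℝ → E} {n : ℕ}

lemma integrable_uncurry_pow_mul_exp_neg_mul_smul
    (hf : ∀ t > 0, IntegrableOn (fun x ↦ exp (-(t * x)) • f x) (Ioi 0))
    (hmoment : IntegrableOn (fun t ↦ t ^ n * laplaceTransform (fun x ↦ ‖f x‖) t) (Ioi 0)) :
    Integrable (Function.uncurry fun x t ↦ (t ^ n * exp (-(t * x))) • f x)
      ((volume.restrict (Ioi 0)).prod (volume.restrict (Ioi 0))) := by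
  have hf_meas : AEStronglyMeasurable f (volume.restrict (Ioi 0)) := by
    refine (continuous_exp.aestronglyMeasurable.smul (hf 1 one_pos).aestronglyMeasurable).congr
      (.of_forall fun x ↦ ?_)
    simp [smul_smul, ← exp_add]
  have hkernel : Continuous fun p : ℝ × ℝ ↦ p.2 ^ n * exp (-(p.2 * p.1)) := by fun_prop
  refine (integrable_prod_iff' (hkernel.aestronglyMeasurable.smul hf_meas.comp_fst)).2 ⟨?_, ?_⟩
  · filter_upwards [ae_restrict_mem measurableSet_Ioi] with t ht
    simpa only [Pi.smul_apply', smul_eq_mul, mul_smul] using (hf t ht).fun_smul (t ^ n)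
  · refine hmoment.congr ?_
    filter_upwards [ae_restrict_mem measurableSet_Ioi] with t ht
    have ht : 0 < t := ht
    simp only [laplaceTransform, Pi.smul_apply', ← integral_const_mul, norm_smul,
      norm_mul, norm_pow, norm_of_nonneg ht.le, norm_of_nonneg (exp_pos _).le, smul_eq_mul,
      mul_assoc]

variable [CompleteSpace E]

lemma ae_integral_Ioi_pow_mul_exp_neg_mul_smul (f : ℝ → E) (n : ℕ) :
    (fun x ↦ ∫ t in Ioi 0, (t ^ n * exp (-(t * x))) • f x) =ᵐ[volume.restrict (Ioi 0)]
      fun x ↦ (n ! / x ^ (n + 1)) • f x := by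
  filter_upwards [ae_restrict_mem measurableSet_Ioi] with x hx
  rw [integral_smul_const, integral_Ioi_pow_mul_exp_neg_mul n hx]

lemma integrableOn_Ioi_factorial_div_pow_smul
    (hf : ∀ t > 0, IntegrableOn (fun x ↦ exp (-(t * x)) • f x) (Ioi 0))
    (hmoment : IntegrableOn (fun t ↦ t ^ n * laplaceTransform (fun x ↦ ‖f x‖) t) (Ioi 0)) :
    IntegrableOn (fun x : ℝ ↦ (n ! / x ^ (n + 1)) • f x) (Ioi 0) :=
  (integrable_uncurry_pow_mul_exp_neg_mul_smul hf hmoment).integral_prod_left.congr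
    (ae_integral_Ioi_pow_mul_exp_neg_mul_smul f n)

lemma integral_Ioi_factorial_div_pow_smul
    (hf : ∀ t > 0, IntegrableOn (fun x ↦ exp (-(t * x)) • f x) (Ioi 0))
    (hmoment : IntegrableOn (fun t ↦ t ^ n * laplaceTransform (fun x ↦ ‖f x‖) t) (Ioi 0)) :
    ∫ x : ℝ in Ioi 0, (n ! / x ^ (n + 1)) • f x = ∫ t in Ioi 0, t ^ n • laplaceTransform f t := by
  rw [← integral_congr_ae (ae_integral_Ioi_pow_mul_exp_neg_mul_smul f n),
    integral_integral_swap (integrable_uncurry_pow_mul_exp_neg_mul_smul hf hmoment)]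
  simp only [laplaceTransform, mul_smul, integral_smul]

end Laplace

section SinPow

lemma integrableOn_exp_neg_mul_mul_sin_pow {t : ℝ} (ht : 0 < t) (n : ℕ) :
    IntegrableOn (fun x ↦ exp (-(t * x)) * sin x ^ n) (Ioi 0) := by
  have hexp : IntegrableOn (fun x ↦ exp (-(t * x))) (Ioi 0) := by
    simpa only [neg_mul] using exp_neg_integrableOn_Ioi 0 ht
  refine hexp.mul_bdd (c := 1) (by fun_prop) (.of_forall fun x ↦ ?_)
  simpa using pow_le_one₀ (abs_nonneg _) (abs_sin_le_one x)

lemma tendsto_exp_neg_mul_mul_sin_pow_mul_add_atTop {t : ℝ} (ht : 0 < t) (n : ℕ) (a b : ℝ) :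
    Tendsto (fun x ↦ exp (-(t * x)) * (sin x ^ n * (a * sin x + b * cos x))) atTop (𝓝 0) := by
  have hexp : Tendsto (fun x ↦ exp (-(t * x))) atTop (𝓝 0) :=
    tendsto_exp_neg_atTop_nhds_zero.comp (tendsto_id.const_mul_atTop ht)
  refine hexp.zero_mul_isBoundedUnder_le (isBoundedUnder_of ⟨1 * (|a| * 1 + |b| * 1), fun x ↦ ?_⟩)
  have hpow : |sin x| ^ n ≤ 1 := pow_le_one₀ (abs_nonneg _) (abs_sin_le_one x)
  have hlin : |a * sin x + b * cos x| ≤ |a| * 1 + |b| * 1 := by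
    refine (abs_add_le _ _).trans ?_
    rw [abs_mul, abs_mul]
    gcongr
    exacts [abs_sin_le_one x, abs_cos_le_one x]
  simp only [Function.comp_apply, norm_eq_abs, abs_mul, abs_pow]
  gcongr

/-- The differentiated function collects the boundary terms of two integrations by parts. -/
lemma hasDerivAt_exp_neg_mul_mul_sin_pow (t : ℝ) (n : ℕ) (x : ℝ) :
    HasDerivAt (fun x ↦ exp (-(t * x)) * (sin x ^ (n + 1) * (-t * sin x + -(n + 2) * cos x)))
      ((t ^ 2 + (n + 2) ^ 2) * (exp (-(t * x)) * sin x ^ (n + 2)) -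
        (n + 2) * (n + 1) * (exp (-(t * x)) * sin x ^ n)) x := by
  have hexp : HasDerivAt (fun x ↦ exp (-(t * x))) (exp (-(t * x)) * -t) x := by
    simpa using ((hasDerivAt_id x).const_mul t).neg.exp
  have hpow : HasDerivAt (fun x ↦ sin x ^ (n + 1)) ((n + 1) * sin x ^ n * cos x) x := by
    simpa using (hasDerivAt_sin x).fun_pow (n + 1)
  have hlin := ((hasDerivAt_sin x).const_mul (-t)).add ((hasDerivAt_cos x).const_mul (-(n + 2 : ℝ)))
  refine (hexp.mul (hpow.mul hlin)).congr_deriv ?_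
  simp only [Pi.add_apply, Pi.mul_apply]
  linear_combination -(n + 2) * (n + 1) * exp (-(t * x)) * sin x ^ n * sin_sq_add_cos_sq x

lemma laplaceTransform_sin_pow_add_two {t : ℝ} (ht : 0 < t) (n : ℕ) :
    (t ^ 2 + (n + 2) ^ 2) * laplaceTransform (fun x ↦ sin x ^ (n + 2)) t =
      (n + 2) * (n + 1) * laplaceTransform (fun x ↦ sin x ^ n) t := by
  have hint_add_two := (integrableOn_exp_neg_mul_mul_sin_pow ht (n + 2)).const_mul
    (t ^ 2 + (n + 2 : ℝ) ^ 2)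
  have hint := (integrableOn_exp_neg_mul_mul_sin_pow ht n).const_mul ((n + 2 : ℝ) * (n + 1))
  have h := integral_Ioi_of_hasDerivAt_of_tendsto' (a := 0)
    (fun x _ ↦ hasDerivAt_exp_neg_mul_mul_sin_pow t n x) (hint_add_two.sub hint)
    (tendsto_exp_neg_mul_mul_sin_pow_mul_add_atTop ht (n + 1) (-t) (-(n + 2)))
  rw [integral_sub hint_add_two hint, integral_const_mul, integral_const_mul] at h
  simpa [laplaceTransform, sub_eq_zero] using h

lemma laplaceTransform_sin_pow_two_mul {t : ℝ} (ht : 0 < t) (k : ℕ) :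
    laplaceTransform (fun x ↦ sin x ^ (2 * k)) t =
      (2 * k)! / (t * ∏ j ∈ Finset.range k, (t ^ 2 + (2 * (j + 1)) ^ 2)) := by
  induction k with
  | zero =>
    have h := integral_exp_mul_Ioi (neg_lt_zero.2 ht) 0
    simpa [laplaceTransform] using h
  | succ k ih =>
    have h := laplaceTransform_sin_pow_add_two ht (2 * k)
    rw [Finset.prod_range_succ, mul_add_one, Nat.factorial_succ, Nat.factorial_succ,
      eq_div_iff (by positivity)]
    rw [ih, mul_div_assoc', eq_div_iff (by positivity)] at h
    push_cast at h ⊢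
    linear_combination h

end SinPow

section RationalIntegrals

lemma inv_sq_add_sq_eq_mul_inv_one_add_sq {a : ℝ} (ha : a ≠ 0) (t : ℝ) :
    (t ^ 2 + a ^ 2)⁻¹ = (a ^ 2)⁻¹ * (1 + (a⁻¹ * t) ^ 2)⁻¹ := by
  field_simp
  ring

lemma integrable_inv_sq_add_sq {a : ℝ} (ha : a ≠ 0) :
    Integrable fun t : ℝ ↦ (t ^ 2 + a ^ 2)⁻¹ := by
  simp only [inv_sq_add_sq_eq_mul_inv_one_add_sq ha]
  exact (integrable_inv_one_add_sq.comp_mul_left' (inv_ne_zero ha)).const_mul _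

lemma integral_Ioi_inv_sq_add_sq {a : ℝ} (ha : 0 < a) :
    ∫ t in Ioi 0, (t ^ 2 + a ^ 2)⁻¹ = π / (2 * a) := by
  simp only [inv_sq_add_sq_eq_mul_inv_one_add_sq ha.ne']
  rw [integral_const_mul,
    integral_comp_mul_left_Ioi (fun t ↦ (1 + t ^ 2)⁻¹) 0 (inv_pos.2 ha), mul_zero,
    integral_Ioi_inv_one_add_sq, arctan_zero, sub_zero, inv_inv, smul_eq_mul]
  field_simp

lemma integrable_pow_div_prod_sq_add_sq {a : ℕ → ℝ} {k : ℕ} (ha : a k ≠ 0) :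
    Integrable fun t : ℝ ↦ t ^ (2 * k) / ∏ j ∈ Finset.range (k + 1), (t ^ 2 + a j ^ 2) := by
  refine (integrable_inv_sq_add_sq ha).mono' (Measurable.aestronglyMeasurable (by fun_prop))
    (.of_forall fun t ↦ ?_)
  have hpow : t ^ (2 * k) ≤ ∏ j ∈ Finset.range k, (t ^ 2 + a j ^ 2) := by
    calc t ^ (2 * k) = ∏ _j ∈ Finset.range k, t ^ 2 := by simp [pow_mul]
      _ ≤ ∏ j ∈ Finset.range k, (t ^ 2 + a j ^ 2) := by
        gcongr with j
        exact le_add_of_nonneg_right (sq_nonneg _)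
  rw [norm_of_nonneg (div_nonneg ((even_two_mul k).pow_nonneg t) (by positivity)),
    Finset.prod_range_succ, ← div_div, div_eq_mul_inv _ (t ^ 2 + a k ^ 2)]
  exact mul_le_of_le_one_left (by positivity) (div_le_one_of_le₀ hpow (by positivity))

lemma integral_Ioi_pow_four_div_mul_mul {a b c : ℝ} (ha : 0 < a) (hb : 0 < b) (hc : 0 < c)
    (hab : a ≠ b) (hac : a ≠ c) (hbc : b ≠ c) :
    ∫ t in Ioi 0, t ^ 4 / ((t ^ 2 + a ^ 2) * (t ^ 2 + b ^ 2) * (t ^ 2 + c ^ 2)) =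
      π / 2 * ((a * b + b * c + c * a) / ((a + b) * (b + c) * (c + a))) := by
  have hab' : a - b ≠ 0 := sub_ne_zero.2 hab
  have hac' : a - c ≠ 0 := sub_ne_zero.2 hac
  have hbc' : b - c ≠ 0 := sub_ne_zero.2 hbc
  have partial_fractions (t : ℝ) :
      t ^ 4 / ((t ^ 2 + a ^ 2) * (t ^ 2 + b ^ 2) * (t ^ 2 + c ^ 2)) =
        a ^ 4 / ((a - b) * (a + b) * ((a - c) * (a + c))) * (t ^ 2 + a ^ 2)⁻¹ -
        b ^ 4 / ((a - b) * (a + b) * ((b - c) * (b + c))) * (t ^ 2 + b ^ 2)⁻¹ +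
        c ^ 4 / ((a - c) * (a + c) * ((b - c) * (b + c))) * (t ^ 2 + c ^ 2)⁻¹ := by
    field_simp
    ring
  have hint {d : ℝ} (hd : 0 < d) (r : ℝ) :
      IntegrableOn (fun t ↦ r * (t ^ 2 + d ^ 2)⁻¹) (Ioi 0) :=
    ((integrable_inv_sq_add_sq hd.ne').const_mul r).integrableOn
  simp only [partial_fractions]
  rw [integral_add ((hint ha _).fun_sub (hint hb _)) (hint hc _),
    integral_sub (hint ha _) (hint hb _)]
  simp only [integral_const_mul, integral_Ioi_inv_sq_add_sq, ha, hb, hc]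
  field_simp
  ring

end RationalIntegrals

section SinPowDivPow

lemma even_sin_pow_div_pow (n : ℕ) : Function.Even fun x : ℝ ↦ sin x ^ n / x ^ n := by
  intro x
  simp only [sin_neg, ← div_pow, neg_div_neg_eq]

lemma pow_mul_laplaceTransform_sin_pow {t : ℝ} (ht : 0 < t) (k : ℕ) :
    t ^ (2 * k + 1) * laplaceTransform (fun x ↦ sin x ^ (2 * k + 2)) t =
      (2 * k + 2)! * (t ^ (2 * k) / ∏ j ∈ Finset.range (k + 1), (t ^ 2 + (2 * (j + 1)) ^ 2)) := by
  rw [← mul_add_one, laplaceTransform_sin_pow_two_mul ht, pow_succ]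
  field_simp

lemma integrableOn_pow_mul_laplaceTransform_norm_sin_pow (k : ℕ) :
    IntegrableOn (fun t ↦ t ^ (2 * k + 1) * laplaceTransform (fun x ↦ ‖sin x ^ (2 * k + 2)‖) t)
      (Ioi 0) := by
  have hnorm (x : ℝ) : ‖sin x ^ (2 * k + 2)‖ = sin x ^ (2 * k + 2) :=
    norm_of_nonneg ((even_two_mul (k + 1)).pow_nonneg _)
  have hrat := integrable_pow_div_prod_sq_add_sq (a := fun j ↦ 2 * (j + 1)) (k := k)
    (by positivity)
  simp only [hnorm]
  exact (hrat.const_mul _).integrableOn.congr_fun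
    (fun t ht ↦ (pow_mul_laplaceTransform_sin_pow ht k).symm) measurableSet_Ioi

lemma integrableOn_Ioi_sin_pow_div_pow (k : ℕ) :
    IntegrableOn (fun x : ℝ ↦ sin x ^ (2 * k + 2) / x ^ (2 * k + 2)) (Ioi 0) := by
  have h := integrableOn_Ioi_factorial_div_pow_smul
    (fun t ht ↦ integrableOn_exp_neg_mul_mul_sin_pow ht (2 * k + 2))
    (integrableOn_pow_mul_laplaceTransform_norm_sin_pow k)
  refine (h.const_mul ((2 * k + 1)! : ℝ)⁻¹).congr (.of_forall fun x ↦ ?_)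
  simp only [smul_eq_mul]
  field_simp

lemma integral_Ioi_sin_pow_div_pow (k : ℕ) :
    ∫ x : ℝ in Ioi 0, sin x ^ (2 * k + 2) / x ^ (2 * k + 2) = (2 * k + 2) *
      ∫ t : ℝ in Ioi 0, t ^ (2 * k) / ∏ j ∈ Finset.range (k + 1), (t ^ 2 + (2 * (j + 1)) ^ 2) := by
  have h := integral_Ioi_factorial_div_pow_smul
    (fun t ht ↦ integrableOn_exp_neg_mul_mul_sin_pow ht (2 * k + 2))
    (integrableOn_pow_mul_laplaceTransform_norm_sin_pow k)
  simp only [smul_eq_mul, div_mul_eq_mul_div, mul_div_assoc] at h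
  rw [setIntegral_congr_fun measurableSet_Ioi fun t ht ↦ pow_mul_laplaceTransform_sin_pow ht k,
    integral_const_mul, integral_const_mul, Nat.factorial_succ (2 * k + 1)] at h
  push_cast at h
  refine mul_left_cancel₀ (Nat.cast_ne_zero.2 (2 * k + 1).factorial_ne_zero) (h.trans ?_)
  ring

end SinPowDivPow

theorem stmt_19 :
    Integrable (fun x : ℝ => Real.sin x ^ 6 / x ^ 6) ∧
    ∫ x : ℝ, Real.sin x ^ 6 / x ^ 6 = 11 / 20 * Real.pi := by
  refine ⟨integrable_of_even_of_integrableOn_Ioi (even_sin_pow_div_pow 6)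
    (integrableOn_Ioi_sin_pow_div_pow 2), ?_⟩
  calc ∫ x : ℝ, sin x ^ 6 / x ^ 6
      = 2 * ∫ x : ℝ in Ioi 0, sin x ^ 6 / x ^ 6 :=
        integral_eq_two_mul_integral_Ioi_of_even (even_sin_pow_div_pow 6)
    _ = 2 * (6 * ∫ t : ℝ in Ioi 0,
          t ^ 4 / ((t ^ 2 + 2 ^ 2) * (t ^ 2 + 4 ^ 2) * (t ^ 2 + 6 ^ 2))) := by
        have h := integral_Ioi_sin_pow_div_pow 2
        norm_num [Finset.prod_range_succ] at h ⊢
        exact h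
    _ = 11 / 20 * π := by
        rw [integral_Ioi_pow_four_div_mul_mul] <;> norm_num
        ring
end
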